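/- If Ŝ is a Neumann subgroup of the extended modular group M̂ = PGL(2,ℤ) that is not contained in the modular group M = PSL(2,ℤ), then S = Ŝ ∩ M is a maximal nonparabolic subgroup of M and S is not a Neumann subgroup of M. -/

import Mathlib

open Matrix Pointwise

noncomputable section

abbrev GL2Z := Matrix.GeneralLinearGroup (Fin 2) ℤ

/-- The subgroup {±I} of GL(2,ℤ), which is its center. -/
def pmI : Subgroup GL2Z := Subgroup.zpowers (-1)

instance pmI_normal : pmI.Normal := by
  constructor
  rintro n hn g
  obtain ⟨k, hk⟩ := Subgroup.mem_zpowers_iff.mp hn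
  have hc : Commute ((-1 : GL2Z) ^ k) g := (Commute.neg_one_left g).zpow_left k
  have : g * n * g⁻¹ = n := by
    rw [← hk, ← hc.eq]; group
  rw [this]; exact hn

/-- The extended modular group PGL(2,ℤ) = GL(2,ℤ)/{±I}. -/
abbrev Mhat := GL2Z ⧸ pmI

def pr : GL2Z →* Mhat := QuotientGroup.mk' pmI

def tauGL : GL2Z := ⟨!![1,1;0,1], !![1,-1;0,1], by decide, by decide⟩
def nuGL : GL2Z := ⟨!![-1,0;0,1], !![-1,0;0,1], by decide, by decide⟩
def omegaGL : GL2Z := ⟨!![0,-1;1,0], !![0,1;-1,0], by decide, by decide⟩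
def phiGL : GL2Z := ⟨!![0,-1;1,1], !![1,1;-1,0], by decide, by decide⟩

/-- τ, the class of [[1,1],[0,1]]. -/
def tau : Mhat := pr tauGL
/-- ν, the class of [[-1,0],[0,1]]. -/
def nu : Mhat := pr nuGL
/-- ω, the class of [[0,-1],[1,0]]. -/
def omega : Mhat := pr omegaGL
/-- φ, the class of [[0,-1],[1,1]]. -/
def phi : Mhat := pr phiGL

/-- T̂ = ⟨τ, ν⟩, the stabilizer of ∞. -/
def That : Subgroup Mhat := Subgroup.closure {tau, nu}

/-- A Neumann subgroup of the extended modular group: a complement of T̂. -/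
def IsNeumann (S : Subgroup Mhat) : Prop :=
  (S : Set Mhat) * (That : Set Mhat) = Set.univ ∧ S ⊓ That = ⊥

/-- The modular group PSL(2,ℤ), as the subgroup of PGL(2,ℤ) of classes of
matrices of determinant one. -/
def Msub : Subgroup Mhat :=
  Subgroup.map pr (MonoidHom.ker (Matrix.GeneralLinearGroup.det))

/-- A parabolic element of the modular group: a nonidentity element of M
conjugate in M to a power of τ. -/
def IsParabolic (g : Mhat) : Prop :=
  g ≠ 1 ∧ ∃ h ∈ Msub, ∃ n : ℤ, h⁻¹ * g * h = tau ^ n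

/-- A nonparabolic subgroup of the modular group M. -/
def IsNonparabolic (S : Subgroup Mhat) : Prop :=
  S ≤ Msub ∧ ∀ g ∈ S, ¬ IsParabolic g

/-- A maximal nonparabolic subgroup of the modular group M: maximal under
inclusion among nonparabolic subgroups of M. -/
def IsMaximalNonparabolic (S : Subgroup Mhat) : Prop :=
  IsNonparabolic S ∧ ∀ U : Subgroup Mhat, IsNonparabolic U → S ≤ U → U = S

/-- A Neumann subgroup of the modular group M: a complement of T = ⟨τ⟩ in M. -/
def IsNeumannM (S : Subgroup Mhat) : Prop :=
  S ≤ Msub ∧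
    (S : Set Mhat) * (Subgroup.zpowers tau : Set Mhat) = (Msub : Set Mhat) ∧
    S ⊓ Subgroup.zpowers tau = ⊥


lemma pr_neg_one : pr (-1) = 1 := by
  apply (QuotientGroup.eq_one_iff _).2
  exact Subgroup.mem_zpowers _

def dHom : Mhat →* ℤˣ := QuotientGroup.lift pmI Matrix.GeneralLinearGroup.det (by
  intro x hx
  obtain ⟨k, rfl⟩ := Subgroup.mem_zpowers_iff.mp hx
  have : Matrix.GeneralLinearGroup.det (-1 : GL2Z) = 1 := by
    apply Units.ext
    simp [Matrix.det_fin_two]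
  show Matrix.GeneralLinearGroup.det ((-1 : GL2Z) ^ k) = 1
  rw [map_zpow, this, _root_.one_zpow])

lemma dHom_pr (g : GL2Z) : dHom (pr g) = Matrix.GeneralLinearGroup.det g := rfl

lemma mem_Msub (g : Mhat) : g ∈ Msub ↔ dHom g = 1 := by
  constructor
  · rintro ⟨x, hx, rfl⟩
    exact hx
  · intro h
    obtain ⟨x, rfl⟩ := QuotientGroup.mk'_surjective pmI g
    exact ⟨x, h, rfl⟩

lemma d_cases (g : Mhat) : dHom g = 1 ∨ dHom g = -1 := Int.units_eq_one_or _

lemma d_tau : dHom tau = 1 := by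
  rw [tau, dHom_pr]; apply Units.ext; simp [tauGL, Matrix.det_fin_two]
lemma d_nu : dHom nu = -1 := by
  rw [nu, dHom_pr]; apply Units.ext; simp [nuGL, Matrix.det_fin_two]
lemma d_omega : dHom omega = 1 := by
  rw [omega, dHom_pr]; apply Units.ext; simp [omegaGL, Matrix.det_fin_two]

lemma nu_sq : nu * nu = 1 := by
  have : nuGL * nuGL = 1 := by apply Units.ext; decide
  rw [nu, ← map_mul, this, map_one]
lemma omega_sq : omega * omega = 1 := by
  have : omegaGL * omegaGL = -1 := by
    apply Units.ext; rw [Units.val_neg]; decide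
  rw [omega, ← map_mul, this, pr_neg_one]
lemma nu_tau : nu * tau * nu = tau⁻¹ := by
  have : nuGL * tauGL * nuGL = tauGL⁻¹ := by
    apply Units.ext; decide
  rw [nu, tau, ← map_mul, ← map_mul, this, map_inv]
lemma nu_omega : nu * omega * nu = omega := by
  have : nuGL * omegaGL * nuGL = (-1) * omegaGL := by
    apply Units.ext; rw [Units.val_mul (-1), Units.val_neg]; decide
  rw [nu, omega, ← map_mul, ← map_mul, this, map_mul, pr_neg_one, one_mul]
lemma omega_tau_cube : (omega * tau) * (omega * tau) * (omega * tau) = 1 := by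
  have : (omegaGL * tauGL) * (omegaGL * tauGL) * (omegaGL * tauGL) = -1 := by
    apply Units.ext; rw [Units.val_neg]; decide
  rw [omega, tau, ← map_mul, ← map_mul, ← map_mul, this, pr_neg_one]

lemma tauGL_zpow (n : ℤ) : ((tauGL ^ n : GL2Z) : Matrix (Fin 2) (Fin 2) ℤ) = !![1, n; 0, 1] := by
  induction n using Int.induction_on with
  | zero => simp [Matrix.one_fin_two]
  | succ i ih =>
    rw [_root_.zpow_add_one, Units.val_mul, ih]
    simp [tauGL, add_comm]
  | pred i ih =>
    rw [_root_.zpow_sub_one, Units.val_mul, ih]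
    have : ((tauGL⁻¹ : GL2Z) : Matrix (Fin 2) (Fin 2) ℤ) = !![1,-1;0,1] := rfl
    rw [this]
    simp; ring

lemma tau_zpow_eq_one {n : ℤ} (h : tau ^ n = 1) : n = 0 := by
  rw [tau, ← map_zpow] at h
  have h' : tauGL ^ n ∈ pmI := (QuotientGroup.eq_one_iff _).1 h
  obtain ⟨k, hk⟩ := Subgroup.mem_zpowers_iff.mp h'
  have h01 : ((tauGL ^ n : GL2Z) : Matrix (Fin 2) (Fin 2) ℤ) 0 1 = 0 := by
    rw [← hk]
    rcases Int.even_or_odd k with hk | hk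
    · rw [hk.neg_one_zpow]; rfl
    · obtain ⟨m, rfl⟩ := hk
      rw [_root_.zpow_add, (even_two_mul m).neg_one_zpow]; simp
  rw [tauGL_zpow] at h01
  simpa using h01

lemma nu_tau_zpow (n : ℤ) : nu * tau ^ n = tau ^ (-n) * nu := by
  have hi : nu⁻¹ = nu := inv_eq_of_mul_eq_one_left nu_sq
  have : (nu * tau * nu⁻¹) ^ n = nu * tau ^ n * nu⁻¹ := conj_zpow
  rw [hi, nu_tau] at this
  have h2 : nu * tau ^ n = (nu * tau ^ n * nu) * nu := by rw [mul_assoc _ nu nu, nu_sq, mul_one]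
  rw [h2, ← this, _root_.inv_zpow, _root_.zpow_neg]

lemma tau_mem (n : ℤ) : tau ^ n ∈ That :=
  zpow_mem (Subgroup.subset_closure (by simp)) n
lemma nu_mem : nu ∈ That := Subgroup.subset_closure (by simp)

lemma That_form {t : Mhat} (h : t ∈ That) : ∃ n : ℤ, t = tau ^ n ∨ t = tau ^ n * nu := by
  have hi : nu⁻¹ = nu := inv_eq_of_mul_eq_one_left nu_sq
  induction h using Subgroup.closure_induction with
  | mem x hx =>
    rcases hx with rfl | rfl
    · exact ⟨1, Or.inl (by simp)⟩
    · exact ⟨0, Or.inr (by simp)⟩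
  | one => exact ⟨0, Or.inl (by simp)⟩
  | mul x y _ _ hx hy =>
    obtain ⟨n, rfl | rfl⟩ := hx <;> obtain ⟨m, rfl | rfl⟩ := hy
    · exact ⟨n + m, Or.inl (by rw [_root_.zpow_add])⟩
    · exact ⟨n + m, Or.inr (by rw [_root_.zpow_add, mul_assoc])⟩
    · exact ⟨n + -m, Or.inr (by rw [_root_.zpow_add, mul_assoc, nu_tau_zpow, mul_assoc])⟩
    · refine ⟨n + -m, Or.inl ?_⟩
      rw [_root_.zpow_add, mul_assoc, ← mul_assoc nu, nu_tau_zpow, mul_assoc, nu_sq, mul_one]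
  | inv x _ hx =>
    obtain ⟨n, rfl | rfl⟩ := hx
    · exact ⟨-n, Or.inl (by rw [_root_.zpow_neg])⟩
    · refine ⟨n, Or.inr ?_⟩
      rw [_root_.mul_inv_rev, hi, ← _root_.zpow_neg, nu_tau_zpow, neg_neg]

lemma d_tau_zpow (n : ℤ) : dHom (tau ^ n) = 1 := by rw [map_zpow, d_tau, _root_.one_zpow]

lemma That_pos {t : Mhat} (h : t ∈ That) (hd : dHom t = 1) : ∃ n : ℤ, t = tau ^ n := by
  obtain ⟨n, rfl | rfl⟩ := That_form h
  · exact ⟨n, rfl⟩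
  · rw [map_mul, d_tau_zpow, d_nu] at hd
    exact absurd hd (by decide)

lemma That_neg {t : Mhat} (h : t ∈ That) (hd : dHom t = -1) : ∃ n : ℤ, t = tau ^ n * nu := by
  obtain ⟨n, rfl | rfl⟩ := That_form h
  · rw [d_tau_zpow] at hd
    exact absurd hd (by decide)
  · exact ⟨n, rfl⟩

lemma comb (f : ℤ → ℤ) (c : ℤ) (h2 : ∀ k, f (f k) = k)
    (h3 : ∀ k, f (f (f k + 1) + 1) + 1 = k) (hc : ∀ k, f (c - k) = c - f k) : False := by
  rcases Int.even_or_odd' c with ⟨m, rfl | rfl⟩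
  · have a := hc m
    have e : 2 * m - m = m := by ring
    rw [e] at a
    have fm : f m = m := by omega
    have b := h3 m
    rw [fm] at b
    have b2 := h2 (f (m + 1) + 1)
    have e2 : f (f (m + 1) + 1) = m - 1 := by omega
    rw [e2] at b2
    have b3 := hc (m + 1)
    have e3 : 2 * m - (m + 1) = m - 1 := by ring
    rw [e3] at b3
    omega
  · -- centre m + 1/2; 1/2 is m+1, -1/2 is m
    obtain ⟨b, hb⟩ : ∃ b, f (m + 1) = b := ⟨_, rfl⟩
    have hm : f m = 2 * m + 1 - b := by
      have := hc (m + 1)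
      rw [hb] at this
      rw [← this]; congr 1; ring
    have h4 : f (b + 1) = 2 * m + 1 - (b + 1) := by
      have := h3 (f m)
      rw [h2, hb] at this
      omega
    have h5 : f (2 * m + 1 - (b + 1)) = b + 1 := by rw [← h4, h2]
    have h6 := h3 (2 * m + 1 - (b + 1))
    rw [h5] at h6
    have e : b + 1 + 1 = b + 2 := by ring
    rw [e] at h6
    have h7 := h2 (f (b + 2) + 1)
    have e2 : f (f (b + 2) + 1) = 2 * m + 1 - (b + 2) := by omega
    rw [e2, hc] at h7
    have h8 : f (b + 2) = m := by omega
    have h9 := h2 (b + 2)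
    rw [h8] at h9
    omega

/-- No reflection normalizes a complement of `T` in `M`. -/
lemma no_refl (U : Subgroup Mhat) (hT : ∀ n : ℤ, tau ^ n ∈ U → n = 0)
    (hM : ∀ g, dHom g = 1 → ∃ n : ℤ, g * tau ^ (-n) ∈ U) (c : ℤ)
    (hr : ∀ g ∈ U, (tau ^ c * nu) * g * (tau ^ c * nu)⁻¹ ∈ U) : False := by
  have hi : nu⁻¹ = nu := inv_eq_of_mul_eq_one_left nu_sq
  have ho : omega⁻¹ = omega := inv_eq_of_mul_eq_one_left omega_sq
  have key : ∀ k : ℤ, ∃ n : ℤ, tau ^ k * omega * tau ^ (-n) ∈ U := fun k =>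
    hM _ (by rw [map_mul, d_tau_zpow, d_omega, one_mul])
  choose f hf using key
  have uniq : ∀ k n : ℤ, tau ^ k * omega * tau ^ (-n) ∈ U → f k = n := by
    intro k n h
    have h1 := U.mul_mem (U.inv_mem (hf k)) h
    have e : (tau ^ k * omega * tau ^ (-f k))⁻¹ * (tau ^ k * omega * tau ^ (-n))
        = tau ^ (f k - n) := by
      group
    rw [e] at h1
    have := hT _ h1
    omega
  refine comb f c ?_ ?_ ?_
  · intro k
    apply uniq
    have h1 := U.inv_mem (hf k)
    have e : (tau ^ k * omega * tau ^ (-f k))⁻¹ = tau ^ (f k) * omega⁻¹ * tau ^ (-k) := by group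
    rwa [e, ho] at h1
  · intro k
    have h1 := U.mul_mem (U.mul_mem (hf k) (hf (f k + 1))) (hf (f (f k + 1) + 1))
    have e : tau ^ k * omega * tau ^ (-f k) * (tau ^ (f k + 1) * omega * tau ^ (-f (f k + 1))) *
        (tau ^ (f (f k + 1) + 1) * omega * tau ^ (-f (f (f k + 1) + 1)))
        = tau ^ k * ((omega * tau) * (omega * tau) * (omega * tau)) *
          tau ^ (-(f (f (f k + 1) + 1) + 1)) := by
      group
    rw [e, omega_tau_cube, mul_one, ← _root_.zpow_add] at h1
    have := hT _ h1
    omega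
  · intro k
    apply uniq
    have h1 := hr _ (hf k)
    have e : tau ^ c * nu * (tau ^ k * omega * tau ^ (-f k)) * (tau ^ c * nu)⁻¹
        = tau ^ (c - k) * omega * tau ^ (-(c - f k)) := by
      rw [_root_.mul_inv_rev, hi]
      calc tau ^ c * nu * (tau ^ k * omega * tau ^ (-f k)) * (nu * (tau ^ c)⁻¹)
          = tau ^ c * (nu * tau ^ k) * omega * (tau ^ (-f k) * nu) * (tau ^ c)⁻¹ := by group
        _ = tau ^ c * (tau ^ (-k) * nu) * omega * (nu * tau ^ (f k)) * (tau ^ c)⁻¹ := by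
          rw [nu_tau_zpow, nu_tau_zpow]
        _ = tau ^ c * tau ^ (-k) * (nu * omega * nu) * tau ^ (f k) * (tau ^ c)⁻¹ := by group
        _ = tau ^ (c - k) * omega * tau ^ (-(c - f k)) := by
          rw [nu_omega]; group
    rwa [e] at h1

lemma unit_cancel {a b : ℤˣ} (h : a * b = 1) : a = b := by
  rcases Int.units_eq_one_or a with rfl | rfl <;> rcases Int.units_eq_one_or b with rfl | rfl <;>
    revert h <;> decide

lemma nonpar_of (Shat : Subgroup Mhat) (h1 : IsNeumann Shat) :
    IsNonparabolic (Shat ⊓ Msub) := by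
  refine ⟨inf_le_right, ?_⟩
  rintro g ⟨hg, -⟩ ⟨hg1, h, -, n, hn⟩
  have hu : h ∈ (Shat : Set Mhat) * (That : Set Mhat) := by rw [h1.1]; trivial
  obtain ⟨s, hs, t, ht, rfl⟩ := hu
  have e : s⁻¹ * g * s = t * tau ^ n * t⁻¹ := by
    rw [← hn]; group
  have m : s⁻¹ * g * s ∈ Shat ⊓ That := by
    refine ⟨Shat.mul_mem (Shat.mul_mem (Shat.inv_mem hs) hg) hs, ?_⟩
    show s⁻¹ * g * s ∈ That
    rw [e]
    exact That.mul_mem (That.mul_mem ht (tau_mem n)) (That.inv_mem ht)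
  rw [h1.2, Subgroup.mem_bot] at m
  apply hg1
  have : g = s * (s⁻¹ * g * s) * s⁻¹ := by group
  rw [this, m]; group

lemma not_neumannM (Shat : Subgroup Mhat) (h1 : IsNeumann Shat) (h2 : ¬ Shat ≤ Msub) :
    ¬ IsNeumannM (Shat ⊓ Msub) := by
  rintro ⟨-, hM, -⟩
  obtain ⟨s0, hs0, hs0M⟩ := SetLike.not_le_iff_exists.1 h2
  have hd : dHom s0 = -1 := (d_cases s0).resolve_left (fun h => hs0M ((mem_Msub _).2 h))
  have hm : s0 * nu ∈ (Msub : Set Mhat) := (mem_Msub _).2 (by rw [map_mul, hd, d_nu]; decide)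
  rw [← hM] at hm
  obtain ⟨s, ⟨hs, hsM⟩, t, ⟨n, rfl⟩, he⟩ := hm
  have he : s * tau ^ n = s0 * nu := he
  have e : s⁻¹ * s0 = tau ^ n * nu⁻¹ := by
    rw [eq_mul_inv_iff_mul_eq, mul_assoc, ← he]; group
  have m : s⁻¹ * s0 ∈ Shat ⊓ That := by
    refine ⟨Shat.mul_mem (Shat.inv_mem hs) hs0, ?_⟩
    show s⁻¹ * s0 ∈ That
    rw [e]
    exact That.mul_mem (tau_mem n) (That.inv_mem nu_mem)
  rw [h1.2, Subgroup.mem_bot, inv_mul_eq_one] at m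
  exact hs0M (m ▸ hsM)

lemma maximal_of (Shat : Subgroup Mhat) (h1 : IsNeumann Shat)
    (U : Subgroup Mhat) (hU : IsNonparabolic U) (hSU : Shat ⊓ Msub ≤ U) : U ≤ Shat := by
  by_contra hne
  obtain ⟨u0, hu0, hu0S⟩ := SetLike.not_le_iff_exists.1 hne
  have hUd : ∀ x ∈ U, dHom x = 1 := fun x hx => (mem_Msub x).1 (hU.1 hx)
  have hSU' : ∀ x ∈ Shat, dHom x = 1 → x ∈ U := fun x hx hd => hSU ⟨hx, (mem_Msub x).2 hd⟩
  have hT1 : ∀ n : ℤ, tau ^ n ∈ U → tau ^ n = 1 := by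
    intro n hn
    by_contra hne
    exact hU.2 _ hn ⟨hne, 1, Msub.one_mem, n, by simp⟩
  have hT : ∀ n : ℤ, tau ^ n ∈ U → n = 0 := fun n hn => tau_zpow_eq_one (hT1 n hn)
  have dec : ∀ g : Mhat, ∃ s ∈ Shat, ∃ t ∈ That, s * t = g := by
    intro g
    have hu : g ∈ (Shat : Set Mhat) * (That : Set Mhat) := by rw [h1.1]; trivial
    exact hu
  -- decomposition of elements of U outside Shat
  have decU : ∀ x ∈ U, x ∉ Shat → ∃ s ∈ Shat, ∃ t ∈ That, s * t = x ∧ dHom s = -1 ∧ dHom t = -1 := by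
    intro x hx hxS
    obtain ⟨s, hs, t, ht, rfl⟩ := dec x
    have hd := hUd _ hx
    rw [map_mul] at hd
    have hst := unit_cancel hd
    rcases d_cases s with h | h
    · exfalso
      obtain ⟨n, rfl⟩ := That_pos ht (hst ▸ h)
      have hn : tau ^ n ∈ U := (Subgroup.mul_mem_cancel_left U (hSU' s hs h)).1 hx
      rw [hT1 n hn, mul_one] at hxS
      exact hxS hs
    · exact ⟨s, hs, t, ht, rfl, h, hst ▸ h⟩
  obtain ⟨s0, hs0, r, hr, hsr, hds0, hdr⟩ := decU u0 hu0 hu0S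
  obtain ⟨c, hc⟩ := That_neg hr hdr
  have hrr : r * r = 1 := by
    rw [hc, mul_assoc, ← mul_assoc nu, nu_tau_zpow, mul_assoc, nu_sq, mul_one, ← _root_.zpow_add]
    simp
  have hri : r⁻¹ = r := inv_eq_of_mul_eq_one_left hrr
  -- Shat minus M, times r, lies in U minus Shat
  have hA : ∀ s ∈ Shat, dHom s = -1 → s * r ∈ U := by
    intro s hs hd
    have e : s * r = (s * s0⁻¹) * u0 := by rw [← hsr]; group
    rw [e]
    refine U.mul_mem (hSU' _ (Shat.mul_mem hs (Shat.inv_mem hs0)) ?_) hu0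
    rw [map_mul, map_inv, hd, hds0]; decide
  have hB : ∀ x ∈ U, x ∉ Shat → x * r ∈ Shat ∧ dHom (x * r) = -1 := by
    intro x hx hxS
    obtain ⟨s, hs, t, ht, rfl, hds, hdt⟩ := decU x hx hxS
    have h := U.mul_mem (U.inv_mem (hA s hs hds)) hx
    have e : (s * r)⁻¹ * (s * t) = r⁻¹ * t := by group
    rw [e] at h
    obtain ⟨n, hn⟩ := That_pos (That.mul_mem (That.inv_mem hr) ht) (hUd _ h)
    rw [hn] at h
    rw [hT1 n h, inv_mul_eq_one] at hn
    subst hn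
    rw [mul_assoc, hrr, mul_one]
    exact ⟨hs, hds⟩
  have hC : ∀ x ∈ U, x ∉ Shat → r * x * r⁻¹ ∈ U := by
    intro x hx hxS
    obtain ⟨a, b⟩ := hB x hx hxS
    have h := U.inv_mem (hA _ (Shat.inv_mem a) (by rw [map_inv, b]; decide))
    have e : ((x * r)⁻¹ * r)⁻¹ = r⁻¹ * x * r := by group
    rw [e] at h
    rw [hri] at h ⊢
    exact h
  refine no_refl U hT ?_ c ?_
  · intro m hm
    obtain ⟨s, hs, t, ht, rfl⟩ := dec m
    have hst : dHom s = dHom t := unit_cancel (by rw [← map_mul]; exact hm)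
    rcases d_cases s with h | h
    · obtain ⟨n, rfl⟩ := That_pos ht (hst ▸ h)
      refine ⟨n, ?_⟩
      have e : s * tau ^ n * tau ^ (-n) = s := by group
      rw [e]; exact hSU' s hs h
    · obtain ⟨n, hn⟩ := That_pos (That.mul_mem hr ht) (by rw [map_mul, hdr, ← hst, h]; decide)
      refine ⟨n, ?_⟩
      have e : s * t * tau ^ (-n) = s * r := by
        rw [_root_.zpow_neg, ← hn, _root_.mul_inv_rev, hri]; group
      rw [e]; exact hA s hs h
  · intro g hg
    rw [← hc]
    by_cases hgS : g ∈ Shat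
    · have k1 := hC _ (U.mul_mem (U.inv_mem hu0) hg) (fun h => hu0S (by
        have := Shat.mul_mem hgS (Shat.inv_mem h)
        have e : g * (u0⁻¹ * g)⁻¹ = u0 := by group
        rwa [e] at this))
      have k2 := U.mul_mem (hC u0 hu0 hu0S) k1
      have e : r * u0 * r⁻¹ * (r * (u0⁻¹ * g) * r⁻¹) = r * g * r⁻¹ := by group
      rwa [e] at k2
    · exact hC g hg hgS

/-- If Ŝ is a Neumann subgroup of the extended modular group
M̂ = PGL(2,ℤ) not contained in the modular group M = PSL(2,ℤ), then S = Ŝ ∩ M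
is a maximal nonparabolic subgroup of M which is not a Neumann subgroup of M. -/
theorem neumann_inter_modular_maximal_nonparabolic_not_neumann
    (Shat : Subgroup Mhat) (h1 : IsNeumann Shat) (h2 : ¬ Shat ≤ Msub) :
    IsMaximalNonparabolic (Shat ⊓ Msub) ∧ ¬ IsNeumannM (Shat ⊓ Msub) := by
  refine ⟨⟨nonpar_of Shat h1, fun U hU hSU => ?_⟩, not_neumannM Shat h1 h2⟩
  exact le_antisymm (le_inf (maximal_of Shat h1 U hU hSU) hU.1) hSU
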